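/- Let 1 ≤ m ≤ n and 1 ≤ m' ≤ n' with m < m'. Then there do not exist Borel maps φ : ([ω]^ω)^{n'} → ([ω]^ω)^n and ψ : 2^ℕ → 2^ℕ such that for every tuple (B_1, …, B_{n'}) of infinite subsets of ℕ and every c ∈ 2^ℕ: if c splits at least m of the n components of φ(B_1, …, B_{n'}), then ψ(c) splits at least m' of B_1, …, B_{n'}. (I.e., there is no Borel Tukey morphism from 𝔰_{n,m} to 𝔰_{n',m'} when m < m'.) -/

import Mathlib

/-- The subset of ℕ coded by an element of Cantor space. -/
def bset (x : ℕ → Bool) : Set ℕ := {n | x n = true}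

/-- `[ω]^ω`, regarded as a subspace of Cantor space via characteristic functions. -/
abbrev InfC := {x : ℕ → Bool // (bset x).Infinite}

/-- `c ∈ 2^ℕ` splits the infinite set `A ⊆ ℕ`: both `{k ∈ A | c k = false}`
and `{k ∈ A | c k = true}` are infinite. -/
def Splits (c : ℕ → Bool) (A : Set ℕ) : Prop :=
  {k ∈ A | c k = false}.Infinite ∧ {k ∈ A | c k = true}.Infinite

open PiNat Set Topology in
theorem aux_open {U : Set (ℕ → Bool)} (hU : IsOpen U) {x : ℕ → Bool} (hx : x ∈ U) :
    ∃ l, ∀ c : ℕ → Bool, (∀ i < l, c i = x i) → c ∈ U := by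
  obtain ⟨_, ⟨y, n, rfl⟩, h1, h2⟩ :=
    (PiNat.isTopologicalBasis_cylinders (fun _ : ℕ => Bool)).exists_subset_of_mem_open hx hU
  refine ⟨n, fun c hc => h2 ?_⟩
  intro i hi
  rw [hc i hi]
  exact h1 i hi

/-- Being infinitely often equal to `b` on an infinite set is a generic property. -/
theorem aux_inf (A : Set ℕ) (hA : A.Infinite) (b : Bool) :
    {c : ℕ → Bool | {k ∈ A | c k = b}.Infinite} ∈ residual (ℕ → Bool) := by
  have h : ∀ N : ℕ, {c : ℕ → Bool | ∃ k ∈ A, N < k ∧ c k = b} ∈ residual (ℕ → Bool) := by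
    intro N
    apply residual_of_dense_open
    · have : {c : ℕ → Bool | ∃ k ∈ A, N < k ∧ c k = b} =
          ⋃ k ∈ {k | k ∈ A ∧ N < k}, {c : ℕ → Bool | c k = b} := by
        ext c; simp [and_assoc]
      rw [this]
      refine isOpen_biUnion fun k _ => ?_
      have h3 := (isOpen_discrete ({b} : Set Bool)).preimage
        (continuous_apply k : Continuous fun c : ℕ → Bool => c k)
      exact h3
    · rw [dense_iff_inter_open]
      rintro U hU ⟨x, hx⟩
      obtain ⟨l, hl⟩ := aux_open hU hx
      obtain ⟨k, hkA, hk⟩ := hA.exists_gt (max N l)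
      refine ⟨Function.update x k b, hl _ ?_, k, hkA, lt_of_le_of_lt (le_max_left _ _) hk, by simp⟩
      intro i hi
      have : i ≠ k := by
        have := lt_of_le_of_lt (le_max_right N l) hk
        omega
      simp [this]
  have h2 := countable_iInter_mem.2 h
  filter_upwards [h2] with c hc
  rw [Set.mem_iInter] at hc
  apply Set.infinite_of_forall_exists_gt
  intro N
  obtain ⟨k, hk, hN, hb⟩ := hc N
  exact ⟨k, ⟨hk, hb⟩, hN⟩

theorem aux_splits (A : Set ℕ) (hA : A.Infinite) :
    ∀ᶠ c in residual (ℕ → Bool), Splits c A :=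
  Filter.inter_mem (aux_inf A hA false) (aux_inf A hA true)

theorem aux_antitone {G : Set (ℕ → Bool)} (hG : G ∈ residual (ℕ → Bool)) :
    ∃ D : ℕ → Set (ℕ → Bool), (∀ n, IsOpen (D n)) ∧ (∀ n, Dense (D n)) ∧ Antitone D ∧
      ∀ c, (∀ n, c ∈ D n) → c ∈ G := by
  obtain ⟨t, htG, ht, hd⟩ := mem_residual.1 hG
  obtain ⟨V, hV, rfl⟩ := ht.eq_iInter_nat
  refine ⟨fun n => ⋂ i ∈ Set.Iic n, V i, ?_, ?_, ?_, ?_⟩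
  · intro n
    exact (Set.finite_Iic n).isOpen_biInter fun i _ => hV i
  · intro n
    refine hd.mono fun c hc => ?_
    simp only [Set.mem_iInter] at hc ⊢
    exact fun i _ => hc i
  · intro a b hab c hc
    simp only [Set.mem_iInter, Set.mem_Iic] at hc ⊢
    exact fun i hi => hc i (hi.trans hab)
  · intro c hc
    apply htG
    simp only [Set.mem_iInter, Set.mem_Iic] at hc ⊢
    exact fun i => hc i i le_rfl

/-- One step of the fusion. -/
theorem aux_step (U : ℕ → Set (ℕ → Bool)) (hU : ∀ k, IsOpen (U k))
    (hcase : ∀ V : Set (ℕ → Bool), IsOpen V → V.Nonempty → {k | ¬ (V ∩ U k).Nonempty}.Finite)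
    (D : Set (ℕ → Bool)) (hD : IsOpen D) (hDd : Dense D) (l K : ℕ) :
    ∃ k l', K < k ∧ l < l' ∧ ∀ p : ℕ → Bool, ∃ q : ℕ → Bool, (∀ i < l, q i = p i) ∧
      ∀ c : ℕ → Bool, (∀ i < l', c i = q i) → c ∈ U k ∧ c ∈ D := by
  let e : (Fin l → Bool) → (ℕ → Bool) := fun s i => if h : i < l then s ⟨i, h⟩ else false
  have hfin : (⋃ s : Fin l → Bool, {k | ¬ (PiNat.cylinder (E := fun _ => Bool) (e s) l ∩ U k).Nonempty}).Finite :=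
    Set.finite_iUnion fun s => hcase _ (PiNat.isOpen_cylinder _ _ _) ⟨_, PiNat.self_mem_cylinder _ _⟩
  obtain ⟨k, hk, hKk⟩ := hfin.infinite_compl.exists_gt K
  have hk' : ∀ s : Fin l → Bool, ∃ q : ℕ → Bool, (∀ i < l, q i = e s i) ∧ ∃ l', 
      ∀ c : ℕ → Bool, (∀ i < l', c i = q i) → c ∈ U k ∧ c ∈ D := by
    intro s
    have h1 : (PiNat.cylinder (E := fun _ => Bool) (e s) l ∩ U k).Nonempty := by
      by_contra h
      exact hk (Set.mem_iUnion.2 ⟨s, h⟩)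
    obtain ⟨q, ⟨hq1, hq2⟩, hq3⟩ := hDd.inter_open_nonempty _
      ((PiNat.isOpen_cylinder (fun _ => Bool) (e s) l).inter (hU k)) h1
    obtain ⟨l', hl'⟩ := aux_open ((hU k).inter hD) (show q ∈ U k ∩ D from ⟨hq2, hq3⟩)
    exact ⟨q, hq1, l', hl'⟩
  choose q hq L hL using hk'
  refine ⟨k, max (l + 1) (Finset.univ.sup L), hKk, lt_of_lt_of_le (Nat.lt_succ_self l) (le_max_left _ _), ?_⟩
  intro p
  refine ⟨q (fun i => p i), ?_, ?_⟩
  · intro i hi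
    rw [hq _ i hi]
    simp [e, hi]
  · intro c hc
    refine hL _ c fun i hi => hc i (lt_of_lt_of_le hi (le_max_of_le_right ?_))
    exact Finset.le_sup (f := L) (Finset.mem_univ _)

theorem aux_seq (U : ℕ → Set (ℕ → Bool)) (hU : ∀ k, IsOpen (U k))
    (hcase : ∀ V : Set (ℕ → Bool), IsOpen V → V.Nonempty → {k | ¬ (V ∩ U k).Nonempty}.Finite)
    (D : ℕ → Set (ℕ → Bool)) (hD : ∀ n, IsOpen (D n)) (hDd : ∀ n, Dense (D n)) :
    ∃ (k l : ℕ → ℕ) (q : ℕ → (ℕ → Bool) → (ℕ → Bool)), StrictMono k ∧ StrictMono l ∧ l 0 = 0 ∧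
      (∀ n p, ∀ i < l n, q n p i = p i) ∧
      ∀ n p (c : ℕ → Bool), (∀ i < l (n+1), c i = q n p i) → c ∈ U (k n) ∧ c ∈ D n := by
  have hstep := fun n => aux_step U hU hcase (D n) (hD n) (hDd n)
  choose k' l' hk hl q hq1 hq2 using hstep
  -- state: (l n, bound K n)
  let st : ℕ → ℕ × ℕ := fun n => Nat.rec (0, 0) (fun n s => (l' n s.1 s.2, k' n s.1 s.2)) n
  have hst : ∀ n, st (n+1) = (l' n (st n).1 (st n).2, k' n (st n).1 (st n).2) := fun n => rfl
  refine ⟨fun n => (st (n+1)).2, fun n => (st n).1, fun n => q n (st n).1 (st n).2, ?_, ?_, rfl, ?_, ?_⟩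
  · refine strictMono_nat_of_lt_succ fun n => ?_
    rw [hst (n+1)]
    exact hk _ _ _
  · refine strictMono_nat_of_lt_succ fun n => ?_
    rw [hst n]
    exact hl _ _ _
  · intro n p i hi
    exact hq1 n _ _ p i hi
  · intro n p c hc
    exact hq2 n _ _ p c hc

/-- Construct `c` following `d` on free blocks and the strategy `q` on blocks in `S`. -/
theorem aux_build (l : ℕ → ℕ) (hl : StrictMono l) (h0 : l 0 = 0)
    (q : ℕ → (ℕ → Bool) → (ℕ → Bool)) (hq : ∀ n p, ∀ i < l n, q n p i = p i)
    (S : Set ℕ) (d : ℕ → Bool) :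
    ∃ c : ℕ → Bool, (∀ n ∈ S, ∃ p, ∀ i < l (n+1), c i = q n p i) ∧
      ∀ n, n ∉ S → ∀ i, l n ≤ i → i < l (n+1) → c i = d i := by
  classical
  let st : ℕ → (ℕ → Bool) := fun n => Nat.rec d
    (fun n s i => if n ∈ S then (if i < l (n+1) then q n s i else d i) else s i) n
  have hst : ∀ n i, st (n+1) i = 
    if n ∈ S then (if i < l (n+1) then q n (st n) i else d i) else st n i := fun n i => rfl
  have hd : ∀ n i, l n ≤ i → st n i = d i := by
    intro n
    induction n with
    | zero => intro i _; rfl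
    | succ n ih =>
      intro i hi
      rw [hst]
      have := hl (Nat.lt_succ_self n)
      split_ifs with h1 h2
      · omega
      · rfl
      · exact ih i (by simp only [Nat.succ_eq_add_one] at this; omega)
  have hs : ∀ n i, i < l n → st (n+1) i = st n i := by
    intro n i hi
    have := hl (Nat.lt_succ_self n)
    simp only [Nat.succ_eq_add_one] at this
    rw [hst]
    split_ifs with h1 h2
    · exact hq _ _ _ hi
    · omega
    · rfl
  have hs2 : ∀ n j i, i < l n → st (n+j) i = st n i := by
    intro n j
    induction j with
    | zero => intro i _; rfl
    | succ j ih =>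
      intro i hi
      rw [← add_assoc, hs _ _ (lt_of_lt_of_le hi (hl.monotone (Nat.le_add_right n j))), ih i hi]
  have hc : ∀ n i, i < l n → st (i+1) i = st n i := by
    intro n i hi
    have h1 : i < l (i+1) := lt_of_lt_of_le (Nat.lt_succ_self i) (hl.le_apply)
    rcases le_total n (i+1) with h | h
    · obtain ⟨j, hj⟩ := Nat.exists_eq_add_of_le h
      rw [hj]; exact hs2 n j i hi
    · obtain ⟨j, rfl⟩ := Nat.exists_eq_add_of_le h
      exact (hs2 _ j i h1).symm
  refine ⟨fun i => st (i+1) i, ?_, ?_⟩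
  · intro n hn
    refine ⟨st n, fun i hi => ?_⟩
    simp only
    rw [hc (n+1) i hi, hst, if_pos hn, if_pos hi]
  · intro n hn i h1 h2
    simp only
    rw [hc (n+1) i h2, hst, if_neg hn, hd n i h1]

theorem aux_not_splits {c : ℕ → Bool} {A : Set ℕ} (b : Bool) (h : {k ∈ A | c k = b}.Finite) :
    ¬ Splits c A := by
  rintro ⟨h1, h2⟩
  cases b
  · exact h1 h
  · exact h2 h

theorem aux_bset (A : Set ℕ) [DecidablePred (· ∈ A)] : bset (fun k => decide (k ∈ A)) = A := by
  ext k; simp [bset]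

/-- For `1 ≤ m ≤ n`, `1 ≤ m' ≤ n'` and `m < m'`, there are no Borel maps
`φ : ([ω]^ω)^{n'} → ([ω]^ω)^n` and `ψ : 2^ℕ → 2^ℕ` such that whenever `c`
splits at least `m` components of `φ(B)`, `ψ(c)` splits at least `m'` of the
`B_i`.  (No Borel Tukey morphism from 𝔰_{n,m} to 𝔰_{n',m'} when `m < m'`.) -/
theorem stmt15 (m n m' n' : ℕ) (hm : 1 ≤ m) (hmn : m ≤ n)
    (hm' : 1 ≤ m') (hmn' : m' ≤ n') (hlt : m < m') :
    ¬ ∃ (φ : (Fin n' → InfC) → (Fin n → InfC)) (ψ : (ℕ → Bool) → (ℕ → Bool)),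
      Measurable φ ∧ Measurable ψ ∧
      ∀ (B : Fin n' → InfC) (c : ℕ → Bool),
        m ≤ {i : Fin n | Splits c (bset (φ B i).1)}.ncard →
        m' ≤ {i : Fin n' | Splits (ψ c) (bset (B i).1)}.ncard := by
  classical
  rintro ⟨φ, ψ, -, hψ, H⟩
  have hE : ∀ k, ∃ u : Set (ℕ → Bool), IsOpen u ∧
      ({c | ψ c k = true} : Set (ℕ → Bool)) =ᶠ[residual _] u := by
    intro k
    have : MeasurableSet {c | ψ c k = true} :=
      ((measurable_pi_apply k).comp hψ) (MeasurableSet.singleton true)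
    exact this.residualEq_isOpen
  choose U hU hEU using hE
  have hG : ∀ᶠ c in residual (ℕ → Bool), ∀ k, (ψ c k = true ↔ c ∈ U k) := by
    rw [eventually_countable_forall]
    intro k
    filter_upwards [(hEU k).mem_iff] with c hc using hc
  -- it suffices to split the first `m` components
  have Hm : ∀ (B : Fin n' → InfC) (c : ℕ → Bool),
      (∀ j : Fin m, Splits c (bset (φ B (Fin.castLE hmn j)).1)) →
      m' ≤ {i : Fin n' | Splits (ψ c) (bset (B i).1)}.ncard := by
    intro B c hc
    apply H B c
    have h1 : Set.range (Fin.castLE hmn) ⊆ {i : Fin n | Splits c (bset (φ B i).1)} := by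
      rintro _ ⟨j, rfl⟩; exact hc j
    have h2 := Set.ncard_le_ncard h1 (Set.toFinite _)
    rwa [Set.ncard_range_of_injective (Fin.castLE_injective hmn), Nat.card_fin] at h2
  by_cases hcase : ∀ V : Set (ℕ → Bool), IsOpen V → V.Nonempty →
      {k | ¬ (V ∩ U k).Nonempty}.Finite
  · obtain ⟨D, hDo, hDd, hDa, hDG⟩ := aux_antitone hG
    obtain ⟨k, l, q, hk, hl, hl0, hq1, hq2⟩ := aux_seq U hU hcase D hDo hDd
    have hn' : 0 < n' := by omega
    let r : ℕ → Fin n' := fun x => ⟨x % n', Nat.mod_lt _ hn'⟩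
    have hr : ∀ i : Fin n', {x | r x = i}.Infinite := by
      intro i
      apply Set.infinite_of_forall_exists_gt
      intro N
      refine ⟨i + n' * (N + 1), ?_, ?_⟩
      · apply Fin.ext
        simp [r, Nat.mod_eq_of_lt i.2]
      · nlinarith
    have hBinf : ∀ i : Fin n', (k '' {x | r x = i}).Infinite :=
      fun i => (hr i).image hk.injective.injOn
    let B : Fin n' → InfC := fun i => ⟨fun x => decide (x ∈ k '' {x | r x = i}), by
      rw [aux_bset]; exact hBinf i⟩
    have hB : ∀ i, bset (B i).1 = k '' {x | r x = i} := fun i => aux_bset _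
    -- block index
    have hblk : ∀ x, ∃ b, l b ≤ x ∧ x < l (b+1) := by
      intro x
      have hex : ∃ b, x < l (b+1) := ⟨x, lt_of_lt_of_le (Nat.lt_succ_self x) hl.le_apply⟩
      refine ⟨Nat.find hex, ?_, Nat.find_spec hex⟩
      by_contra hcon
      push Not at hcon
      rcases hz : Nat.find hex with _ | b
      · rw [hz, hl0] at hcon; omega
      · rw [hz] at hcon
        exact Nat.find_min hex (m := b) (by omega) hcon
    choose b hb1 hb2 using hblk
    have hpig : ∀ j : Fin m, ∃ i : Fin n',
        {x ∈ bset (φ B (Fin.castLE hmn j)).1 | r (b x) = i}.Infinite := by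
      intro j
      by_contra hcon
      push Not at hcon
      apply (φ B (Fin.castLE hmn j)).2
      refine (Set.finite_iUnion hcon).subset ?_
      intro x hx
      exact Set.mem_iUnion.2 ⟨r (b x), hx, rfl⟩
    choose f hf using hpig
    obtain ⟨d, hd⟩ : ∃ d : ℕ → Bool, ∀ j : Fin m,
        Splits d {x ∈ bset (φ B (Fin.castLE hmn j)).1 | r (b x) = f j} := by
      have : ∀ᶠ d in residual (ℕ → Bool), ∀ j : Fin m,
          Splits d {x ∈ bset (φ B (Fin.castLE hmn j)).1 | r (b x) = f j} := by
        rw [eventually_countable_forall]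
        exact fun j => aux_splits _ (hf j)
      exact (dense_of_mem_residual this).nonempty
    obtain ⟨c, hcS, hcd⟩ := aux_build l hl hl0 q hq1 {x | r x ∉ Set.range f} d
    have hcS' : ∀ x, r x ∉ Set.range f → c ∈ U (k x) ∧ c ∈ D x := by
      intro x hx
      obtain ⟨p, hp⟩ := hcS x hx
      exact hq2 x p c hp
    have hcard : (Set.range f).ncard ≤ m := by
      have := Set.ncard_image_le (f := f) (Set.toFinite (Set.univ : Set (Fin m)))
      rwa [Set.image_univ, Set.ncard_univ, Nat.card_fin] at this
    obtain ⟨i0, hi0⟩ : ∃ i0, i0 ∉ Set.range f := by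
      by_contra hcon
      push Not at hcon
      rw [Set.eq_univ_of_forall hcon, Set.ncard_univ, Nat.card_fin] at hcard
      omega
    have hcG : ∀ k, (ψ c k = true ↔ c ∈ U k) := by
      apply hDG
      intro N
      obtain ⟨x, hx, hxN⟩ := (hr i0).exists_gt N
      have hx' : r x = i0 := hx
      exact hDa hxN.le (hcS' x (by rw [hx']; exact hi0)).2
    have hfin := Hm B c (by
      intro j
      have hsub : ∀ v, {x ∈ {x ∈ bset (φ B (Fin.castLE hmn j)).1 | r (b x) = f j} | d x = v} ⊆
          {x ∈ bset (φ B (Fin.castLE hmn j)).1 | c x = v} := by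
        rintro v x ⟨⟨hx1, hx2⟩, hx3⟩
        refine ⟨hx1, ?_⟩
        rw [hcd (b x) ?_ x (hb1 x) (hb2 x)]
        · exact hx3
        · intro h
          exact h ⟨j, hx2.symm⟩
      exact ⟨(hd j).1.mono (hsub _), (hd j).2.mono (hsub _)⟩)
    have hsub : {i : Fin n' | Splits (ψ c) (bset (B i).1)} ⊆ Set.range f := by
      intro i hi
      by_contra hcon
      refine aux_not_splits false ?_ hi
      convert Set.finite_empty
      rw [Set.eq_empty_iff_forall_notMem]
      rintro y ⟨hy1, hy2⟩
      rw [hB] at hy1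
      obtain ⟨x, hx, rfl⟩ := hy1
      have hx' : r x = i := hx
      have := (hcG (k x)).2 (hcS' x (by rw [hx']; exact hcon)).1
      rw [this] at hy2
      cases hy2
    have := Set.ncard_le_ncard hsub (Set.toFinite _)
    omega
  · push Not at hcase
    obtain ⟨V, hV, hVne, hinf⟩ := hcase
    have hinf' : {k | ¬ (V ∩ U k).Nonempty}.Infinite := by
      simpa [Set.not_nonempty_iff_eq_empty] using hinf
    obtain ⟨W, hW⟩ : ∃ W : Set ℕ, W = {k | ¬ (V ∩ U k).Nonempty} := ⟨_, rfl⟩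
    let B : Fin n' → InfC := fun _ => ⟨fun x => decide (x ∈ W), by
      rw [aux_bset, hW]; exact hinf'⟩
    have hB : ∀ i, bset (B i).1 = {k | ¬ (V ∩ U k).Nonempty} :=
      fun i => (aux_bset W).trans hW
    have hres : ∀ᶠ c in residual (ℕ → Bool), (∀ k, (ψ c k = true ↔ c ∈ U k)) ∧
        ∀ j : Fin m, Splits c (bset (φ B (Fin.castLE hmn j)).1) := by
      refine hG.and ?_
      rw [eventually_countable_forall]
      exact fun j => aux_splits _ (φ B (Fin.castLE hmn j)).2
    obtain ⟨c, hcV, hc1, hc2⟩ := (dense_of_mem_residual hres).inter_open_nonempty V hV hVne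
    have h1 := Hm B c hc2
    have h2 : {i : Fin n' | Splits (ψ c) (bset (B i).1)} = ∅ := by
      rw [Set.eq_empty_iff_forall_notMem]
      intro i hi
      refine aux_not_splits true ?_ hi
      convert Set.finite_empty
      rw [Set.eq_empty_iff_forall_notMem]
      rintro y ⟨hy1, hy2⟩
      rw [hB i] at hy1
      exact hy1 ⟨c, hcV, (hc1 y).1 hy2⟩
    rw [h2, Set.ncard_empty] at h1
    omega
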